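/- Let n be a nonzero integer, r₀ > 0, r > r₀, and θ ∈ ℝ. Then the radial derivative of the single-layer potential of the density e^{inφ} on the circle of radius r₀ at the exterior point re^{iθ} satisfies ∫₀^{2π} (r₀/(2π)) · (r − r₀ cos(θ − φ))/(r² + r₀² − 2rr₀ cos(θ − φ)) · e^{inφ} dφ = (1/2) · (r₀/r)^{|n|+1} · e^{inθ}. -/

import Mathlib

open Complex in
lemma aux_poisson (n : ℕ) (hn : n ≠ 0) (q θ : ℝ) (hq : 0 < q) (hq1 : q < 1) :
    (∫ φ in (0:ℝ)..(2 * Real.pi),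
      (((1 - q ^ 2) / (1 + q ^ 2 - 2 * q * Real.cos (θ - φ)) : ℝ) : ℂ) * Complex.exp (I * n * φ))
      = 2 * Real.pi * (q : ℂ) ^ n * Complex.exp (I * n * θ) := by
  have hd : DiffContOnCl ℂ (fun z : ℂ => z ^ n) (Metric.ball 0 1) := by
    apply Differentiable.diffContOnCl; fun_prop
  have hw : (q * exp (I * θ) : ℂ) ∈ Metric.ball (0:ℂ) 1 := by
    simp [Complex.norm_exp, abs_of_pos hq, hq1]
  have h := hd.circleAverage_poissonKernel_smul hw
  rw [Real.circleAverage_def, inv_smul_eq_iff₀ (by positivity)] at h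
  have e : ∀ x : ℂ, exp (I * n * x) = exp (I * x) ^ n := by
    intro x; rw [← Complex.exp_nat_mul]; ring_nf
  rw [e, mul_assoc, ← mul_pow]
  have h2 : ((2 * Real.pi) • (q * exp (I * θ)) ^ n : ℂ) = 2 * Real.pi * (q * exp (I * θ)) ^ n := by
    simp
  rw [← h2, ← h]
  apply intervalIntegral.integral_congr
  intro φ _
  simp only [Pi.smul_apply', circleMap_zero, real_smul, ofReal_one, one_mul]
  rw [e, mul_comm (φ : ℂ) I]
  congr 2
  rw [poissonKernel_def]
  simp only [sub_zero, norm_mul]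
  rw [mul_comm I, Complex.norm_exp_ofReal_mul_I, mul_comm I, Complex.norm_exp_ofReal_mul_I]
  have : ‖(exp (φ * I) - q * exp (θ * I) : ℂ)‖ ^ 2 = 1 + q ^ 2 - 2 * q * Real.cos (θ - φ) := by
    rw [← Complex.normSq_eq_norm_sq, Complex.normSq_apply]
    simp [Complex.exp_ofReal_mul_I_re, Complex.exp_ofReal_mul_I_im, Real.cos_sub]
    nlinarith [Real.sin_sq_add_cos_sq θ, Real.sin_sq_add_cos_sq φ]
  rw [this]; simp

lemma aux_mean (n : ℕ) (hn : n ≠ 0) :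
    (∫ φ in (0:ℝ)..(2 * Real.pi), Complex.exp (Complex.I * n * φ)) = 0 := by
  rw [integral_exp_mul_complex (by simp [hn])]
  have : Complex.I * n * ((2 * Real.pi : ℝ) : ℂ) = n * (2 * Real.pi * Complex.I) := by
    push_cast; ring
  rw [this, Complex.exp_nat_mul_two_pi_mul_I]; simp

lemma aux_nat (n : ℕ) (hn : n ≠ 0) (r₀ r θ : ℝ) (hr₀ : 0 < r₀) (hrr₀ : r₀ < r) :
    (∫ φ in (0:ℝ)..(2 * Real.pi),
        ((r₀ / (2 * Real.pi) *
            ((r - r₀ * Real.cos (θ - φ)) /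
              (r ^ 2 + r₀ ^ 2 - 2 * r * r₀ * Real.cos (θ - φ))) : ℝ) : ℂ) *
          Complex.exp (Complex.I * n * φ)) =
      (1 / 2 : ℂ) * (((r₀ / r : ℝ) : ℂ)) ^ (n + 1) *
        Complex.exp (Complex.I * n * θ) := by
  have hr : 0 < r := hr₀.trans hrr₀
  have hq : 0 < r₀ / r := by positivity
  have hq1 : r₀ / r < 1 := (div_lt_one hr).2 hrr₀
  have h1 := aux_poisson n hn (r₀ / r) θ hq hq1
  have h2 := aux_mean n hn
  have hpos : ∀ q : ℝ, 0 < q → q < 1 → ∀ x : ℝ, 0 < 1 + q ^ 2 - 2 * q * Real.cos x := by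
    intro q h0 h1 x
    nlinarith [Real.cos_le_one x, mul_nonneg h0.le (sub_nonneg.2 (Real.cos_le_one x)),
      mul_pos (sub_pos.2 h1) (sub_pos.2 h1)]
  have key : ∀ φ : ℝ, ((r₀ / (2 * Real.pi) *
            ((r - r₀ * Real.cos (θ - φ)) /
              (r ^ 2 + r₀ ^ 2 - 2 * r * r₀ * Real.cos (θ - φ))) : ℝ) : ℂ) *
          Complex.exp (Complex.I * n * φ) =
      ((r₀ / r / (4 * Real.pi) : ℝ) : ℂ) * (Complex.exp (Complex.I * n * φ) +
        (((1 - (r₀ / r) ^ 2) / (1 + (r₀ / r) ^ 2 - 2 * (r₀ / r) * Real.cos (θ - φ)) : ℝ) : ℂ)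
          * Complex.exp (Complex.I * n * φ)) := by
    intro φ
    have : r₀ / (2 * Real.pi) *
            ((r - r₀ * Real.cos (θ - φ)) /
              (r ^ 2 + r₀ ^ 2 - 2 * r * r₀ * Real.cos (θ - φ))) =
        (r₀ / r / (4 * Real.pi)) *
        (1 + (1 - (r₀ / r) ^ 2) / (1 + (r₀ / r) ^ 2 - 2 * (r₀ / r) * Real.cos (θ - φ))) := by
      have hp := hpos _ hq hq1 (θ - φ)
      have hD : r ^ 2 + r₀ ^ 2 - 2 * r * r₀ * Real.cos (θ - φ) =
          r ^ 2 * (1 + (r₀ / r) ^ 2 - 2 * (r₀ / r) * Real.cos (θ - φ)) := by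
        field_simp
      have hN : r - r₀ * Real.cos (θ - φ) = r * (1 - r₀ / r * Real.cos (θ - φ)) := by
        field_simp
      have h0 : r₀ = r * (r₀ / r) := by field_simp
      rw [hD, hN]
      generalize r₀ / r = q at *
      subst h0
      have := hp.ne'
      have := hr.ne'
      have := Real.pi_ne_zero
      rw [one_add_div hp.ne']
      generalize hE : 1 + q ^ 2 - 2 * q * Real.cos (θ - φ) = E at *
      field_simp
      rw [← hE]; ring
    rw [this]; push_cast; ring
  simp_rw [key]
  rw [intervalIntegral.integral_const_mul, intervalIntegral.integral_add, h1, h2]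
  · have : (Real.pi : ℂ) ≠ 0 := by exact_mod_cast Real.pi_ne_zero
    have : (r : ℂ) ≠ 0 := by exact_mod_cast hr.ne'
    rw [Complex.ofReal_div (r₀ / r)]
    generalize ((r₀ / r : ℝ) : ℂ) = Q
    push_cast
    field_simp
    ring
  · apply Continuous.intervalIntegrable; fun_prop
  · apply Continuous.intervalIntegrable
    refine Continuous.mul (Complex.continuous_ofReal.comp ?_) (by fun_prop)
    exact Continuous.div (by fun_prop) (by fun_prop) (fun x => (hpos _ hq hq1 _).ne')


/-- Radial derivative of the single-layer potential of the density `e^{inφ}` on the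
circle of radius `r₀` at an exterior point `re^{iθ}` (with `r > r₀ > 0`):
`∫₀^{2π} (r₀/2π) (r - r₀cos(θ-φ))/(r² + r₀² - 2rr₀cos(θ-φ)) e^{inφ} dφ
  = (1/2) (r₀/r)^{|n|+1} e^{inθ}`. -/
theorem stmt_8 (n : ℤ) (hn : n ≠ 0) (r₀ r θ : ℝ) (hr₀ : 0 < r₀) (hrr₀ : r₀ < r) :
    (∫ φ in (0:ℝ)..(2 * Real.pi),
        ((r₀ / (2 * Real.pi) *
            ((r - r₀ * Real.cos (θ - φ)) /
              (r ^ 2 + r₀ ^ 2 - 2 * r * r₀ * Real.cos (θ - φ))) : ℝ) : ℂ) *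
          Complex.exp (Complex.I * n * φ)) =
      (1 / 2 : ℂ) * (((r₀ / r : ℝ) : ℂ)) ^ (n.natAbs + 1) *
        Complex.exp (Complex.I * n * θ) := by
  obtain ⟨m, rfl | rfl⟩ := n.eq_nat_or_neg
  · have := aux_nat m (by simpa using hn) r₀ r θ hr₀ hrr₀
    simpa using this
  · have := aux_nat m (by simpa using hn) r₀ r θ hr₀ hrr₀
    have h := congrArg (starRingEnd ℂ) this
    rw [← intervalIntegral.intervalIntegral_conj] at h
    simp only [map_mul, map_pow, Complex.conj_ofReal, ← Complex.exp_conj, Complex.conj_I,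
      map_natCast, map_div₀, map_one, map_ofNat] at h
    simpa using h
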